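/- There exist constants c₁, c₂ > 0 and y₀ such that for every real y ≥ y₀ there is x₀ = x₀(y) with the following property: for all x ≥ x₀, the number of y-rough primes p ≤ x lies between c₁·π(x)/log y and c₂·π(x)/log y. -/

import Mathlib

/-!
Let `T` be the set of odd primes below `y` and `M` their product. A prime `p` not dividing `M` is
`y`-rough exactly when its residue modulo `M` lies in the set `S` of those units `a` for which
`a - 1` is a unit too. By the Chinese remainder theorem `|S| / φ(M) = ∏_{q ∈ T} (q - 2) / (q - 1)`,
and Mertens-type estimates show that this product has order `1 / log y` (`prod_density_bounds`). It
remains to count primes in each residue class modulo `M` up to absolute constants, that is, with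
constants not depending on `M`: `card_classPrimes_bounds` gives `≍ x / (φ(M) log x)` for all
`x` large in terms of `M`. The same bounds with modulus `1` control `π(x)`.

The count in residue classes is a weak form of the prime number theorem in arithmetic progressions.
For `b = Λ · 1_{n ≡ a}`, Mathlib provides a continuous extension to `Re s ≥ 1` of
`∑ b(n) n^{-s} - φ(M)⁻¹ / (s - 1)`; this contains the nonvanishing of Dirichlet `L`-functions on
`Re s = 1`. Integrating over `s = 1 + δ + it`, `0 ≤ t ≤ 2`, against a window `w(t) e^{itL}`, letting
`δ → 0` and then `L → ∞` (Riemann–Lebesgue) gives, for the cosine transform `k` of `w`, the limit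
`∑ b(n) n⁻¹ k(L - log n) → φ(M)⁻¹ ∫ k` (`smoothed_tauberian`). For the upper bound, `k` is chosen
positive, and for the lower bound `k` has positive integral but is nonpositive outside a compact
set, so that only `n ≍ e^L` contribute positively. Both kernels come from windows
`sinh (m (2 - t))`, whose transforms are explicit rational-trigonometric functions. The constants
depend only on `k`, and this is why they are uniform in the modulus.

Of the Mertens estimates, `∏_{p < N} (1 - 1/p)⁻¹ ≥ log N` follows by expanding the product over
smooth numbers, and the opposite bound by comparing with the Euler product of `ζ` at
`1 + 1 / log N`, where `∑_{p < N} log p / p ≤ log N + O(1)` controls the change of exponent.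
-/


/-- A prime `p` is `y`-rough if every prime factor of `p - 1` other than `2`
is at least `y`. -/
def IsRough (y : ℝ) (p : ℕ) : Prop :=
  ∀ q : ℕ, q.Prime → q ∣ p - 1 → q ≠ 2 → y ≤ (q : ℝ)

noncomputable section RoughPrimes

open Filter Topology MeasureTheory

/-! ### Windows on a vertical segment and a smoothed Tauberian theorem -/

/-- The cosine transform of a window `w` on `[0, 2]`. -/
def cosTransform (w : ℝ → ℝ) (v : ℝ) : ℝ := ∫ t in (0 : ℝ)..2, w t * Real.cos (t * v)

lemma continuous_cosTransform {w : ℝ → ℝ} (hw : Continuous w) : Continuous (cosTransform w) := by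
  unfold cosTransform
  apply intervalIntegral.continuous_parametric_intervalIntegral_of_continuous'
  fun_prop

lemma re_intervalIntegral {f : ℝ → ℂ} (hf : Continuous f) (a b : ℝ) :
    (∫ t in a..b, f t).re = ∫ t in a..b, (f t).re :=
  (Complex.reCLM.intervalIntegral_comp_comm (hf.intervalIntegrable a b)).symm

lemma re_window_exp {w : ℝ → ℝ} (hw : Continuous w) (v : ℝ) :
    (∫ t in (0 : ℝ)..2, (w t : ℂ) * Complex.exp (Complex.I * t * v)).re = cosTransform w v := by
  rw [re_intervalIntegral (by fun_prop)]
  unfold cosTransform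
  congr 1; ext t
  rw [Complex.re_ofReal_mul]
  congr 1
  rw [show Complex.I * (t : ℂ) * v = ((t * v : ℝ) : ℂ) * Complex.I by push_cast; ring,
    Complex.exp_ofReal_mul_I_re]

/-- Integrating a Dirichlet series along a vertical segment against the window. -/
lemma hasSum_window {b : ℕ → ℝ}
    (hs : ∀ s : ℂ, 1 < s.re → LSeriesSummable (fun n ↦ (b n : ℂ)) s)
    {w : ℝ → ℝ} (hw : Continuous w) {δ : ℝ} (hδ : 0 < δ) (L : ℝ) :
    HasSum (fun n : ℕ ↦ if n = 0 then 0 else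
        b n * (n : ℝ) ^ (-(1 + δ)) * cosTransform w (L - Real.log n))
      (∫ t in (0 : ℝ)..2, (w t : ℂ) * Complex.exp (Complex.I * t * L) *
        LSeries (fun n ↦ (b n : ℂ)) (1 + δ + t * Complex.I)).re := by
  have hre (t : ℝ) : (1 + δ + t * Complex.I : ℂ).re = 1 + δ := by simp
  have hcont (n : ℕ) : Continuous fun t : ℝ ↦ (w t : ℂ) * Complex.exp (Complex.I * t * L) *
      LSeries.term (fun n ↦ (b n : ℂ)) (1 + δ + t * Complex.I) n := by
    rcases eq_or_ne n 0 with rfl | hn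
    · simpa using continuous_const
    · simp only [LSeries.term_of_ne_zero hn]
      have : (n : ℂ) ≠ 0 := by exact_mod_cast hn
      have h2 (t : ℝ) : (n : ℂ) ^ (1 + δ + t * Complex.I : ℂ) ≠ 0 := by
        simp [Complex.cpow_eq_zero_iff, this]
      have h3 : Continuous fun t : ℝ ↦ (n : ℂ) ^ (1 + δ + t * Complex.I : ℂ) := by
        apply Continuous.const_cpow (by fun_prop) (Or.inl this)
      have := Continuous.div₀ (continuous_const (y := (b n : ℂ))) h3 h2
      fun_prop
  have hsumδ := (hs (1 + δ) (by simpa using hδ)).norm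
  have key : HasSum (fun n : ℕ ↦ ∫ t in (0 : ℝ)..2, (w t : ℂ) * Complex.exp (Complex.I * t * L) *
        LSeries.term (fun n ↦ (b n : ℂ)) (1 + δ + t * Complex.I) n)
      (∫ t in (0 : ℝ)..2, (w t : ℂ) * Complex.exp (Complex.I * t * L) *
        LSeries (fun n ↦ (b n : ℂ)) (1 + δ + t * Complex.I)) := by
    apply intervalIntegral.hasSum_integral_of_dominated_convergence
      (fun n t ↦ |w t| * ‖LSeries.term (fun n ↦ (b n : ℂ)) (1 + δ) n‖)
    · intro n
      exact (hcont n).aestronglyMeasurable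
    · intro n
      refine ae_of_all _ fun t _ ↦ ?_
      rw [norm_mul, norm_mul, Complex.norm_real, Real.norm_eq_abs,
        show Complex.I * (t : ℂ) * L = ((t * L : ℝ) : ℂ) * Complex.I by push_cast; ring,
        Complex.norm_exp_ofReal_mul_I, mul_one]
      apply mul_le_mul_of_nonneg_left _ (abs_nonneg _)
      rw [LSeries.norm_term_eq, LSeries.norm_term_eq, hre]
      simp
    · exact ae_of_all _ fun t _ ↦ hsumδ.mul_left _
    · simp_rw [tsum_mul_left]
      exact (by fun_prop : Continuous _).intervalIntegrable _ _
    · refine ae_of_all _ fun t _ ↦ ?_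
      exact (LSeriesSummable.LSeriesHasSum (hs _ (by rw [hre]; linarith))).mul_left _
  convert! Complex.hasSum_re key using 2 with n
  split_ifs with hn
  · simp [hn]
  rw [← re_window_exp hw]
  rw [← Complex.re_ofReal_mul, ← intervalIntegral.integral_const_mul]
  congr 2; ext t
  rw [LSeries.term_of_ne_zero hn]
  have hn0 : (n : ℂ) ≠ 0 := by exact_mod_cast hn
  rw [Complex.cpow_def_of_ne_zero hn0, Complex.ofReal_mul,
    Complex.ofReal_cpow (by positivity), Complex.ofReal_natCast, Complex.cpow_def_of_ne_zero hn0,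
    Complex.ofReal_sub, Complex.natCast_log, div_eq_mul_inv, ← Complex.exp_neg]
  have : Complex.exp (Complex.log n * ((-(1 + δ) : ℝ) : ℂ)) *
      Complex.exp (Complex.I * t * (L - Complex.log n)) = Complex.exp (Complex.I * t * L) *
      Complex.exp (-(Complex.log n * (1 + δ + t * Complex.I))) := by
    rw [← Complex.exp_add, ← Complex.exp_add]
    congr 1; push_cast; ring
  linear_combination (b n * w t : ℂ) * this

/-- The contribution of the pole, via `1 / (δ + it) = ∫₀^∞ e^{-(δ + it)u} du`. -/
lemma re_window_pole {w : ℝ → ℝ} (hw : Continuous w) {δ : ℝ} (hδ : 0 < δ) (L : ℝ) :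
    (∫ t in (0 : ℝ)..2, (w t : ℂ) * Complex.exp (Complex.I * t * L) / (δ + t * Complex.I)).re =
      ∫ u in Set.Ioi (0 : ℝ), Real.exp (-δ * u) * cosTransform w (L - u) := by
  have h1 (t : ℝ) : (w t : ℂ) * Complex.exp (Complex.I * t * L) / (δ + t * Complex.I) =
      ∫ u in Set.Ioi (0 : ℝ), (w t : ℂ) * Complex.exp (Complex.I * t * L) *
        Complex.exp (-(δ + t * Complex.I) * u) := by
    rw [MeasureTheory.integral_const_mul, integral_exp_mul_complex_Ioi (by simpa using hδ)]
    rw [Complex.ofReal_zero, mul_zero, Complex.exp_zero, neg_div_neg_eq, mul_one_div]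
  have h_intble : Integrable (Function.uncurry fun (t : ℝ) (u : ℝ) ↦
      (w t : ℂ) * Complex.exp (Complex.I * t * L) * Complex.exp (-(δ + t * Complex.I) * u))
      ((volume.restrict (Set.uIoc 0 2)).prod (volume.restrict (Set.Ioi 0))) := by
    have hA : Integrable (fun t : ℝ ↦ |w t|) (volume.restrict (Set.uIoc 0 2)) := by
      have := (continuous_abs.comp hw).intervalIntegrable (μ := volume) 0 2
      rwa [intervalIntegrable_iff] at this
    have hB : Integrable (fun u : ℝ ↦ Real.exp (-δ * u)) (volume.restrict (Set.Ioi 0)) :=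
      exp_neg_integrableOn_Ioi 0 hδ
    refine (hA.mul_prod hB).mono' ?_ ?_
    · exact Continuous.aestronglyMeasurable (by unfold Function.uncurry; fun_prop)
    · refine ae_of_all _ fun p ↦ ?_
      simp only [Function.uncurry]
      rw [norm_mul, norm_mul, Complex.norm_real, Real.norm_eq_abs,
        show Complex.I * (p.1 : ℂ) * L = ((p.1 * L : ℝ) : ℂ) * Complex.I by push_cast; ring,
        Complex.norm_exp_ofReal_mul_I, mul_one, Complex.norm_exp]
      simp
  have h_intble_u := h_intble.integral_prod_right
  simp_rw [h1]
  rw [intervalIntegral_integral_swap h_intble]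
  have := Complex.reCLM.integral_comp_comm (μ := volume.restrict (Set.Ioi 0))
    (φ := fun u : ℝ ↦ ∫ t in (0 : ℝ)..2, (w t : ℂ) * Complex.exp (Complex.I * t * L) *
        Complex.exp (-(δ + t * Complex.I) * u)) (by
      convert h_intble_u using 2 with u
      rw [intervalIntegral.integral_of_le (by norm_num), Set.uIoc_of_le (by norm_num)]
      rfl)
  simp only [Complex.reCLM_apply] at this
  rw [← this]
  congr 1; ext u
  rw [← re_window_exp hw, ← Complex.re_ofReal_mul, ← intervalIntegral.integral_const_mul]
  congr 2; ext t
  have : Complex.exp (Complex.I * t * L) * Complex.exp (-(δ + t * Complex.I) * u) =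
      ((Real.exp (-δ * u) : ℝ) : ℂ) * Complex.exp (Complex.I * t * ((L - u : ℝ) : ℂ)) := by
    rw [Complex.ofReal_exp, ← Complex.exp_add, ← Complex.exp_add]
    congr 1; push_cast; ring
  linear_combination (w t : ℂ) * this

lemma integrable_of_le_inv_one_add_sq {k : ℝ → ℝ} (hk : Continuous k) {C : ℝ}
    (hC : ∀ v, |k v| ≤ C * (1 + v ^ 2)⁻¹) : Integrable k :=
  (integrable_inv_one_add_sq.const_mul C).mono' hk.aestronglyMeasurable (ae_of_all _ hC)

lemma tendsto_laplace {k : ℝ → ℝ} (hk : Integrable k) (L : ℝ) :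
    Tendsto (fun δ : ℝ ↦ ∫ u in Set.Ioi (0 : ℝ), Real.exp (-δ * u) * k (L - u)) (𝓝[>] 0)
      (𝓝 (∫ u in Set.Ioi (0 : ℝ), k (L - u))) := by
  have hk' : Integrable (fun u ↦ k (L - u)) := hk.comp_sub_left L
  apply tendsto_integral_filter_of_dominated_convergence (fun u ↦ |k (L - u)|)
  · refine Eventually.of_forall fun δ ↦ ?_
    exact ((by fun_prop : Continuous fun u : ℝ ↦ Real.exp (-δ * u)).aestronglyMeasurable).mul
      hk'.aestronglyMeasurable.restrict
  · filter_upwards [self_mem_nhdsWithin] with δ hδ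
    filter_upwards [ae_restrict_mem measurableSet_Ioi] with u hu
    rw [norm_mul, Real.norm_eq_abs, Real.norm_eq_abs, Real.abs_exp]
    apply mul_le_of_le_one_left (abs_nonneg _)
    rw [Real.exp_le_one_iff]
    have : 0 < δ * u := mul_pos hδ hu
    linarith
  · exact hk'.abs.restrict
  · refine ae_of_all _ fun u ↦ ?_
    have : Tendsto (fun δ : ℝ ↦ Real.exp (-δ * u) * k (L - u)) (𝓝 0)
        (𝓝 (Real.exp (-0 * u) * k (L - u))) := by
      apply Continuous.tendsto
      fun_prop
    simpa using this.mono_left nhdsWithin_le_nhds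

lemma tendsto_integral_shift {k : ℝ → ℝ} (hk : Integrable k) :
    Tendsto (fun L : ℝ ↦ ∫ u in Set.Ioi (0 : ℝ), k (L - u)) atTop (𝓝 (∫ v, k v)) := by
  have h (L : ℝ) : ∫ u in Set.Ioi (0 : ℝ), k (L - u) = ∫ v, (Set.Iio L).indicator k v := by
    rw [← integral_indicator measurableSet_Ioi, ← integral_sub_left_eq_self _ volume L]
    congr 1; ext u
    simp [Set.indicator]
  simp_rw [h]
  apply tendsto_integral_filter_of_dominated_convergence (fun u ↦ |k u|)
  · exact Eventually.of_forall fun L ↦ hk.aestronglyMeasurable.indicator measurableSet_Iio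
  · exact Eventually.of_forall fun L ↦ ae_of_all _ fun v ↦ norm_indicator_le_norm_self _ _
  · exact hk.abs
  · refine ae_of_all _ fun v ↦ ?_
    apply tendsto_const_nhds.congr'
    filter_upwards [eventually_gt_atTop v] with L hL
    simp [Set.indicator, hL]

/-- Riemann–Lebesgue on `[0, 2]`. -/
lemma tendsto_riemannLebesgue {f : ℝ → ℂ} :
    Tendsto (fun L : ℝ ↦ ∫ t in (0 : ℝ)..2, f t * Complex.exp (Complex.I * t * L)) atTop
      (𝓝 0) := by
  have h := Real.tendsto_integral_exp_smul_cocompact ((Set.Ioc (0 : ℝ) 2).indicator f)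
  have h2 : Tendsto (fun L : ℝ ↦ L * (-(2 * Real.pi)⁻¹)) atTop (cocompact ℝ) := by
    refine Tendsto.mono_right ?_ atBot_le_cocompact
    exact tendsto_id.atTop_mul_const_of_neg (by simp [Real.pi_pos])
  refine (h.comp h2).congr fun L ↦ ?_
  rw [intervalIntegral.integral_of_le (by norm_num), ← integral_indicator measurableSet_Ioc]
  simp only [Function.comp]
  congr 1; ext t
  simp only [Set.indicator]
  split_ifs with ht
  · rw [Circle.smul_def, Real.fourierChar_apply, smul_eq_mul, mul_comm]
    congr 2
    push_cast
    field_simp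
  · simp

lemma window_remainder {G : ℂ → ℂ} (hG : ContinuousOn G {s | 1 ≤ s.re}) {w : ℝ → ℝ}
    (hw : Continuous w) (L : ℝ) :
    Tendsto (fun δ : ℝ ↦ (∫ t in (0 : ℝ)..2, (w t : ℂ) * Complex.exp (Complex.I * t * L) *
        G (1 + δ + t * Complex.I))) (𝓝[>] 0)
      (𝓝 (∫ t in (0 : ℝ)..2, (w t : ℂ) * Complex.exp (Complex.I * t * L) *
        G (1 + t * Complex.I))) := by
  have hc : Continuous fun p : ℝ × ℝ ↦ G (1 + (max p.1 0 : ℝ) + p.2 * Complex.I) := by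
    refine hG.comp_continuous (by fun_prop) fun p ↦ ?_
    simp
  have h2 : Continuous fun δ : ℝ ↦ (∫ t in (0 : ℝ)..2, (w t : ℂ) *
      Complex.exp (Complex.I * t * L) * G (1 + (max δ 0 : ℝ) + t * Complex.I)) := by
    apply intervalIntegral.continuous_parametric_intervalIntegral_of_continuous'
    exact Continuous.mul (by fun_prop) hc
  have h3 := (h2.tendsto 0).mono_left (nhdsWithin_le_nhds (s := Set.Ioi 0))
  simp only [max_self, Complex.ofReal_zero, add_zero] at h3
  refine h3.congr' ?_
  filter_upwards [self_mem_nhdsWithin] with δ hδ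
  rw [max_eq_left (le_of_lt hδ)]

/-- A smoothed form of the Wiener–Ikehara theorem. Here `S δ` is the sum of
`b(n) n^{-1-δ} k(L - log n)` with `k` the cosine transform of `w`, and `H L` is its limit as `δ → 0`.
The limit stays outside the sum, as `∑ b(n) / n` itself diverges; finite partial sums or the sign of
`k` allow passing to `δ = 0` where this is needed. -/
theorem smoothed_tauberian {b : ℕ → ℝ}
    (hs : ∀ s : ℂ, 1 < s.re → LSeriesSummable (fun n ↦ (b n : ℂ)) s)
    {κ : ℝ} {G : ℂ → ℂ} (hG : ContinuousOn G {s | 1 ≤ s.re})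
    (hL : ∀ s : ℂ, 1 < s.re → LSeries (fun n ↦ (b n : ℂ)) s = G s + κ / (s - 1))
    {w : ℝ → ℝ} (hw : Continuous w) {C : ℝ}
    (hC : ∀ v, |cosTransform w v| ≤ C * (1 + v ^ 2)⁻¹) :
    ∃ H : ℝ → ℝ, Tendsto H atTop (𝓝 (κ * ∫ v, cosTransform w v)) ∧
      ∀ L, ∃ S : ℝ → ℝ, Tendsto S (𝓝[>] 0) (𝓝 (H L)) ∧ ∀ δ > 0,
        HasSum (fun n : ℕ ↦ if n = 0 then 0 else
          b n * (n : ℝ) ^ (-(1 + δ)) * cosTransform w (L - Real.log n)) (S δ) := by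
  have hk : Integrable (cosTransform w) :=
    integrable_of_le_inv_one_add_sq (continuous_cosTransform hw) hC
  refine ⟨fun L ↦ (∫ t in (0 : ℝ)..2, (w t : ℂ) * Complex.exp (Complex.I * t * L) *
      G (1 + t * Complex.I)).re + κ * ∫ u in Set.Ioi (0 : ℝ), cosTransform w (L - u), ?_,
    fun L ↦ ⟨fun δ ↦ (∫ t in (0 : ℝ)..2, (w t : ℂ) * Complex.exp (Complex.I * t * L) *
      G (1 + δ + t * Complex.I)).re +
      κ * ∫ u in Set.Ioi (0 : ℝ), Real.exp (-δ * u) * cosTransform w (L - u), ?_, ?_⟩⟩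
  -- The part of the integral without the pole tends to zero by Riemann–Lebesgue.
  · have h1 := tendsto_riemannLebesgue (f := fun t : ℝ ↦ (w t : ℂ) * G (1 + t * Complex.I))
    have h2 := (Complex.continuous_re.tendsto 0).comp h1
    have h3 := h2.add ((tendsto_integral_shift hk).const_mul κ)
    simp only [Complex.zero_re, zero_add] at h3
    refine h3.congr fun L ↦ ?_
    simp only [Function.comp]
    congr 4; ext t; ring
  · exact ((Complex.continuous_re.tendsto _).comp (window_remainder hG hw L)).add
      ((tendsto_laplace hk L).const_mul κ)
  · intro δ hδ
    convert! hasSum_window hs hw hδ L using 1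
    have hre (t : ℝ) : (1 + δ + t * Complex.I : ℂ).re = 1 + δ := by simp
    have hne (t : ℝ) : (δ + t * Complex.I : ℂ) ≠ 0 := by
      intro h
      have := congrArg Complex.re h
      simp at this
      linarith
    have hGc : Continuous fun t : ℝ ↦ G (1 + δ + t * Complex.I) :=
      hG.comp_continuous (by fun_prop) fun t ↦ by
        simp only [Set.mem_ofPred_eq, hre]; linarith
    beta_reduce
    rw [← re_window_pole hw hδ, ← Complex.re_ofReal_mul, ← Complex.add_re,
      ← intervalIntegral.integral_const_mul, ← intervalIntegral.integral_add]
    · congr 2; ext t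
      rw [hL _ (by rw [hre]; linarith)]
      rw [show (1 + δ + t * Complex.I - 1 : ℂ) = δ + t * Complex.I by ring]
      ring
    · exact (Continuous.mul (by fun_prop) hGc).intervalIntegrable _ _
    · refine Continuous.intervalIntegrable (continuous_const.mul ?_) _ _
      exact Continuous.div₀ (by fun_prop) (by fun_prop) hne

/-! ### Chebyshev bounds from a pole at `s = 1` -/

/-- The window whose cosine transform is `m (cosh 2m - cos 2v) / (m² + v²)`. -/
def sinhWindow (m t : ℝ) : ℝ := Real.sinh (m * (2 - t))

lemma continuous_sinhWindow (m : ℝ) : Continuous (sinhWindow m) := by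
  unfold sinhWindow; fun_prop

lemma cosTransform_sinhWindow {m : ℝ} (hm : 0 < m) (v : ℝ) :
    cosTransform (sinhWindow m) v =
      m * (Real.cosh (2 * m) - Real.cos (2 * v)) / (m ^ 2 + v ^ 2) := by
  have hne : m ^ 2 + v ^ 2 ≠ 0 := by positivity
  have hderiv (t : ℝ) : HasDerivAt (fun t ↦ (-(m * (Real.cosh (m * (2 - t)) * Real.cos (t * v))) +
      v * (Real.sinh (m * (2 - t)) * Real.sin (t * v))) / (m ^ 2 + v ^ 2))
      (Real.sinh (m * (2 - t)) * Real.cos (t * v)) t := by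
    have h1 : HasDerivAt (fun t : ℝ ↦ m * (2 - t)) (m * (-1)) t :=
      ((hasDerivAt_id t).const_sub 2).const_mul m
    have h2 : HasDerivAt (fun t : ℝ ↦ t * v) (1 * v) t := (hasDerivAt_id t).mul_const v
    have h3 := (((h1.cosh.mul h2.cos).const_mul m).neg.add
      ((h1.sinh.mul h2.sin).const_mul v)).div_const (m ^ 2 + v ^ 2)
    convert! h3 using 1
    field_simp
    ring
  unfold cosTransform sinhWindow
  rw [intervalIntegral.integral_eq_sub_of_hasDerivAt (fun t _ ↦ hderiv t)
    ((by fun_prop : Continuous _).intervalIntegrable _ _)]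
  simp
  field_simp
  ring_nf

lemma cosTransform_linear {w₁ w₂ : ℝ → ℝ} (h₁ : Continuous w₁) (h₂ : Continuous w₂) (α β v : ℝ) :
    cosTransform (fun t ↦ α * w₁ t - β * w₂ t) v =
      α * cosTransform w₁ v - β * cosTransform w₂ v := by
  unfold cosTransform
  rw [← intervalIntegral.integral_const_mul, ← intervalIntegral.integral_const_mul,
    ← intervalIntegral.integral_sub]
  · congr 1; ext t; ring
  · exact (by fun_prop : Continuous _).intervalIntegrable _ _
  · exact (by fun_prop : Continuous _).intervalIntegrable _ _

lemma cosh_two_bounds : 3.69 < Real.cosh 2 ∧ Real.cosh 2 < 4 := by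
  have h1 := Real.exp_one_gt_d9
  have h2 := Real.exp_one_lt_d9
  have e2 : Real.exp 2 = Real.exp 1 ^ 2 := by rw [← Real.exp_nat_mul]; norm_num
  have l : 7.38 < Real.exp 2 := by rw [e2]; nlinarith
  have u : Real.exp 2 < 7.39 := by rw [e2]; nlinarith
  have p := Real.exp_pos (-2)
  have q : Real.exp (-2) ≤ 1 / 2 := by
    rw [Real.exp_neg, inv_eq_one_div]
    exact one_div_le_one_div_of_le two_pos (by linarith)
  rw [Real.cosh_eq]
  constructor <;> linarith

lemma cosh_six_bounds : 200.5 < Real.cosh 6 ∧ Real.cosh 6 < 204 := by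
  have h1 := Real.exp_one_gt_d9
  have h2 := Real.exp_one_lt_d9
  have e2 : Real.exp 6 = Real.exp 1 ^ 6 := by rw [← Real.exp_nat_mul]; norm_num
  have l : 402 < Real.exp 6 := by
    rw [e2]
    exact lt_of_lt_of_le (by norm_num) (pow_le_pow_left₀ (by norm_num) h1.le 6)
  have u : Real.exp 6 < 405 := by
    rw [e2]
    exact lt_of_le_of_lt (pow_le_pow_left₀ (Real.exp_pos 1).le h2.le 6) (by norm_num)
  have p := Real.exp_pos (-6)
  have q : Real.exp (-6) ≤ 1 := Real.exp_le_one_iff.2 (by norm_num)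
  rw [Real.cosh_eq]
  constructor <;> linarith

/-- The kernel for the upper bound: comparable with `1 / (1 + v²)`. -/
lemma majorant_bounds (v : ℝ) :
    (1 + v ^ 2)⁻¹ ≤ cosTransform (sinhWindow 1) v ∧
      cosTransform (sinhWindow 1) v ≤ 5 * (1 + v ^ 2)⁻¹ := by
  rw [cosTransform_sinhWindow one_pos, mul_one, one_pow, one_mul, div_eq_mul_inv]
  obtain ⟨h1, h2⟩ := cosh_two_bounds
  have h3 := Real.cos_le_one (2 * v)
  have h4 := Real.neg_one_le_cos (2 * v)
  have h5 : 0 < (1 + v ^ 2)⁻¹ := by positivity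
  constructor
  · exact le_mul_of_one_le_left h5.le (by linarith)
  · exact mul_le_mul_of_nonneg_right (by linarith) h5.le

/-- The window for the lower bound. Its cosine transform has the form
`A(v) / (1 + v²) - B(v) / (9 + v²)` with `80 ≤ A ≤ 150` and `199 ≤ B ≤ 205`: for large `v` the
negative term wins, while the integral is at least `π (80 - 205 / 3) > 0`. -/
def minorantWindow (t : ℝ) : ℝ := 30 * sinhWindow 1 t - 1 / 3 * sinhWindow 3 t

lemma continuous_minorantWindow : Continuous minorantWindow := by
  have := continuous_sinhWindow
  unfold minorantWindow; fun_prop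

lemma minorant_eq (v : ℝ) : cosTransform minorantWindow v =
    30 * (Real.cosh 2 - Real.cos (2 * v)) * (1 + v ^ 2)⁻¹ -
      (Real.cosh 6 - Real.cos (2 * v)) * (9 + v ^ 2)⁻¹ := by
  unfold minorantWindow
  rw [cosTransform_linear (continuous_sinhWindow 1) (continuous_sinhWindow 3),
    cosTransform_sinhWindow one_pos, cosTransform_sinhWindow three_pos]
  norm_num
  ring

lemma minorant_bounds (v : ℝ) :
    80 * (1 + v ^ 2)⁻¹ - 205 * (9 + v ^ 2)⁻¹ ≤ cosTransform minorantWindow v ∧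
    cosTransform minorantWindow v ≤ 150 * (1 + v ^ 2)⁻¹ - 199 * (9 + v ^ 2)⁻¹ := by
  rw [minorant_eq]
  obtain ⟨h1, h2⟩ := cosh_two_bounds
  obtain ⟨h1', h2'⟩ := cosh_six_bounds
  have h3 := Real.cos_le_one (2 * v)
  have h4 := Real.neg_one_le_cos (2 * v)
  have h5 : 0 < (1 + v ^ 2)⁻¹ := by positivity
  have h6 : 0 < (9 + v ^ 2)⁻¹ := by positivity
  constructor
  · exact sub_le_sub (mul_le_mul_of_nonneg_right (by linarith) h5.le)
      (mul_le_mul_of_nonneg_right (by linarith) h6.le)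
  · exact sub_le_sub (mul_le_mul_of_nonneg_right (by linarith) h5.le)
      (mul_le_mul_of_nonneg_right (by linarith) h6.le)

lemma minorant_abs_le (v : ℝ) : |cosTransform minorantWindow v| ≤ 205 * (1 + v ^ 2)⁻¹ := by
  obtain ⟨h1, h2⟩ := minorant_bounds v
  have h5 : 0 < (1 + v ^ 2)⁻¹ := by positivity
  have h6 : 0 < (9 + v ^ 2)⁻¹ := by positivity
  have h7 : (9 + v ^ 2)⁻¹ ≤ (1 + v ^ 2)⁻¹ := by gcongr; norm_num
  rw [abs_le]; constructor <;> linarith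

lemma minorant_le (v : ℝ) : cosTransform minorantWindow v ≤ 150 := by
  obtain ⟨h1, h2⟩ := minorant_bounds v
  have h5 : (1 + v ^ 2)⁻¹ ≤ 1 := inv_le_one_of_one_le₀ (by nlinarith)
  have h6 : 0 < (9 + v ^ 2)⁻¹ := by positivity
  linarith

lemma minorant_nonpos {v : ℝ} (hv : 5 ≤ |v|) : cosTransform minorantWindow v ≤ 0 := by
  refine (minorant_bounds v).2.trans ?_
  have : 25 ≤ v ^ 2 := by rw [← sq_abs]; nlinarith
  rw [sub_nonpos, ← div_eq_mul_inv, ← div_eq_mul_inv, div_le_div_iff₀ (by positivity) (by positivity)]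
  nlinarith

lemma integrable_minorant : Integrable (cosTransform minorantWindow) :=
  integrable_of_le_inv_one_add_sq (continuous_cosTransform continuous_minorantWindow)
    minorant_abs_le

lemma integral_minorant_pos : 0 < ∫ v, cosTransform minorantWindow v := by
  have h9 (v : ℝ) : (9 + v ^ 2)⁻¹ = 9⁻¹ * (1 + (v / 3) ^ 2)⁻¹ := by
    rw [← mul_inv]; congr 1; ring
  have i1 : Integrable fun v : ℝ ↦ 80 * (1 + v ^ 2)⁻¹ := integrable_inv_one_add_sq.const_mul _
  have i2 : Integrable fun v : ℝ ↦ 205 * (9 + v ^ 2)⁻¹ := by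
    simp_rw [h9]
    exact ((integrable_inv_one_add_sq.comp_div (by norm_num)).const_mul _).const_mul _
  have h := integral_mono (i1.sub i2) integrable_minorant fun v ↦ (minorant_bounds v).1
  refine lt_of_lt_of_le ?_ h
  rw [integral_sub' i1 i2]
  simp_rw [h9]
  rw [integral_const_mul, integral_const_mul, integral_const_mul, integral_univ_inv_one_add_sq,
    Measure.integral_comp_div (fun v : ℝ ↦ (1 + v ^ 2)⁻¹), integral_univ_inv_one_add_sq]
  have := Real.pi_pos
  rw [abs_of_pos three_pos, smul_eq_mul]
  nlinarith

/-- Chebyshev-type bounds, with absolute constants, for a nonnegative sequence whose Dirichlet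
series has a continuous extension to `Re s ≥ 1` after removal of a pole `κ / (s - 1)`. -/
theorem chebyshev_of_LSeries : ∃ c > 0, ∃ C > 0, ∀ (b : ℕ → ℝ) (_ : ∀ n, 0 ≤ b n)
    (_ : ∀ s : ℂ, 1 < s.re → LSeriesSummable (fun n ↦ (b n : ℂ)) s)
    (κ : ℝ) (_ : 0 < κ) (G : ℂ → ℂ) (_ : ContinuousOn G {s | 1 ≤ s.re})
    (_ : ∀ s : ℂ, 1 < s.re → LSeries (fun n ↦ (b n : ℂ)) s = G s + κ / (s - 1)),
    ∀ᶠ x : ℕ in atTop, c * κ * x ≤ ∑ n ∈ Finset.Icc 1 x, b n ∧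
      ∑ n ∈ Finset.Icc 1 x, b n ≤ C * κ * x := by
  set I := ∫ v, cosTransform minorantWindow v with hI
  have hIpos : 0 < I := integral_minorant_pos
  set J := ∫ v, cosTransform (sinhWindow 1) v with hJ
  have hJ0 : 0 ≤ J := integral_nonneg fun v ↦ le_trans (by positivity) (majorant_bounds v).1
  refine ⟨I * Real.exp (-10) / 300, by positivity, 2 * (J + 1), by positivity, ?_⟩
  intro b hb hs κ hκ G hG hL
  have hlog : Tendsto (fun x : ℕ ↦ Real.log x) atTop atTop :=
    Real.tendsto_log_atTop.comp tendsto_natCast_atTop_atTop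
  have hlim (n : ℕ) (hn : n ≠ 0) (A : ℝ) : Tendsto (fun δ : ℝ ↦ b n * (n : ℝ) ^ (-(1 + δ)) * A)
      (𝓝[>] 0) (𝓝 (b n * (n : ℝ)⁻¹ * A)) := by
    have hn' : (0 : ℝ) < n := by positivity
    have : Continuous fun δ : ℝ ↦ b n * (n : ℝ) ^ (-(1 + δ)) * A := by
      have : Continuous fun δ : ℝ ↦ (n : ℝ) ^ (-(1 + δ)) :=
        Continuous.rpow continuous_const (by fun_prop) fun _ ↦ Or.inl hn'.ne'
      fun_prop
    have h := (this.tendsto 0).mono_left (nhdsWithin_le_nhds (s := Set.Ioi 0))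
    simpa [Real.rpow_neg_one] using h
  refine Filter.Eventually.and ?_ ?_
  · obtain ⟨H, hH, hS⟩ := smoothed_tauberian hs hG hL continuous_minorantWindow minorant_abs_le
    rw [← hI] at hH
    -- The kernel at `L = log x - 5 - log n` is nonpositive unless `e⁻¹⁰ x < n < x`.
    have hlog5 : Tendsto (fun x : ℕ ↦ Real.log x - 5) atTop atTop :=
      tendsto_atTop_add_const_right _ _ hlog
    have hev := hlog5.eventually (hH.eventually (lt_mem_nhds (show κ * I / 2 < κ * I by
      have : 0 < κ * I := by positivity
      linarith)))
    filter_upwards [hev, eventually_ge_atTop 1] with x hx hx1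
    have hx0 : (0 : ℝ) < x := by exact_mod_cast hx1
    obtain ⟨S, hSlim, hSsum⟩ := hS (Real.log x - 5)
    have hle : H (Real.log x - 5) ≤ ∑ n ∈ Finset.Icc 1 x,
        b n * (n : ℝ)⁻¹ * cosTransform minorantWindow (Real.log x - 5 - Real.log n) := by
      refine le_of_tendsto_of_tendsto hSlim
        (tendsto_finsetSum _ fun n hn ↦ hlim n (by simp at hn; omega) _) ?_
      filter_upwards [self_mem_nhdsWithin] with δ hδ
      have h := sum_le_hasSum (Finset.Icc 1 x) (fun n hn ↦ ?_) (hSsum δ hδ).neg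
      · rw [Finset.sum_neg_distrib, neg_le_neg_iff] at h
        refine h.trans (Finset.sum_le_sum fun n hn ↦ ?_)
        rw [if_neg (by simp at hn; omega)]
      · split_ifs with h0
        · simp
        have hxn : (x : ℝ) ≤ n := by
          simp at hn
          exact_mod_cast (hn (by omega)).le
        have := Real.log_le_log hx0 hxn
        have h1 := minorant_nonpos (v := Real.log x - 5 - Real.log n)
          (by rw [le_abs]; right; linarith)
        rw [neg_nonneg]
        exact mul_nonpos_of_nonneg_of_nonpos (mul_nonneg (hb n) (by positivity)) h1
    have hle2 : ∑ n ∈ Finset.Icc 1 x,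
        b n * (n : ℝ)⁻¹ * cosTransform minorantWindow (Real.log x - 5 - Real.log n) ≤
        ∑ n ∈ Finset.Icc 1 x, b n * (150 * Real.exp 10 / x) := by
      refine Finset.sum_le_sum fun n hn ↦ ?_
      rw [mul_assoc]
      apply mul_le_mul_of_nonneg_left _ (hb n)
      have hn0 : (0 : ℝ) < n := by
        simp at hn; exact_mod_cast hn.1
      rcases le_or_gt (Real.log n) (Real.log x - 10) with h | h
      · have h1 := minorant_nonpos (v := Real.log x - 5 - Real.log n)
          (by rw [le_abs]; left; linarith)
        exact (mul_nonpos_of_nonneg_of_nonpos (by positivity) h1).trans (by positivity)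
      · have h1 := minorant_le (Real.log x - 5 - Real.log n)
        have h2 : (n : ℝ)⁻¹ ≤ Real.exp 10 / x := by
          rw [inv_eq_one_div, div_le_div_iff₀ hn0 hx0, one_mul]
          rw [← Real.log_le_log_iff hx0 (by positivity), Real.log_mul (by positivity) (by positivity),
            Real.log_exp]
          linarith
        calc (n : ℝ)⁻¹ * _ ≤ (n : ℝ)⁻¹ * 150 := mul_le_mul_of_nonneg_left h1 (by positivity)
          _ ≤ Real.exp 10 / x * 150 := mul_le_mul_of_nonneg_right h2 (by norm_num)
          _ = _ := by ring
    have hfin := (hx.le.trans hle).trans hle2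
    rw [← Finset.sum_mul] at hfin
    have h10 : Real.exp (-10) * Real.exp 10 = 1 := by rw [← Real.exp_add]; simp
    have := mul_le_mul_of_nonneg_right hfin (show 0 ≤ Real.exp (-10) * x / 150 by positivity)
    calc _ = κ * I / 2 * (Real.exp (-10) * x / 150) := by ring
      _ ≤ _ := this
      _ = (∑ n ∈ Finset.Icc 1 x, b n) * (Real.exp (-10) * Real.exp 10) := by field_simp
      _ = _ := by rw [h10, mul_one]
  · obtain ⟨H, hH, hS⟩ := smoothed_tauberian hs hG hL (continuous_sinhWindow 1) (C := 5)
      fun v ↦ by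
        rw [abs_of_nonneg (le_trans (by positivity) (majorant_bounds v).1)]
        exact (majorant_bounds v).2
    rw [← hJ] at hH
    have hev := hlog.eventually (hH.eventually (gt_mem_nhds (show κ * J < κ * (J + 1) by
      linarith)))
    filter_upwards [hev, eventually_ge_atTop 1] with x hx hx1
    have hx0 : (0 : ℝ) < x := by exact_mod_cast hx1
    obtain ⟨S, hSlim, hSsum⟩ := hS (Real.log x)
    have hle : ∑ n ∈ Finset.Icc 1 x,
        b n * (n : ℝ)⁻¹ * cosTransform (sinhWindow 1) (Real.log x - Real.log n) ≤
        H (Real.log x) := by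
      refine le_of_tendsto_of_tendsto
        (tendsto_finsetSum _ fun n hn ↦ hlim n (by simp at hn; omega) _) hSlim ?_
      filter_upwards [self_mem_nhdsWithin] with δ hδ
      refine le_trans (Finset.sum_le_sum fun n hn ↦ ?_)
        (sum_le_hasSum (Finset.Icc 1 x) (fun n hn ↦ ?_) (hSsum δ hδ))
      · rw [if_neg (by simp at hn; omega)]
      · split_ifs with h0
        · simp
        · exact mul_nonneg (mul_nonneg (hb n) (by positivity))
            (le_trans (by positivity) (majorant_bounds _).1)
    have hle2 : ∑ n ∈ Finset.Icc 1 x, b n * (1 / (2 * x)) ≤ ∑ n ∈ Finset.Icc 1 x,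
        b n * (n : ℝ)⁻¹ * cosTransform (sinhWindow 1) (Real.log x - Real.log n) := by
      refine Finset.sum_le_sum fun n hn ↦ ?_
      rw [mul_assoc]
      apply mul_le_mul_of_nonneg_left _ (hb n)
      simp only [Finset.mem_Icc] at hn
      have hn0 : (0 : ℝ) < n := by exact_mod_cast hn.1
      have hnx : (n : ℝ) ≤ x := by exact_mod_cast hn.2
      have hv : 0 ≤ Real.log x - Real.log n := sub_nonneg.2 (Real.log_le_log hn0 hnx)
      have he : Real.exp (Real.log x - Real.log n) = x / n := by
        rw [Real.exp_sub, Real.exp_log hx0, Real.exp_log hn0]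
      have hq := Real.quadratic_le_exp_of_nonneg hv
      rw [he] at hq
      set v := Real.log x - Real.log n
      calc 1 / (2 * (x : ℝ)) = (n : ℝ)⁻¹ * (2 * (x / n : ℝ))⁻¹ := by field_simp
        _ ≤ (n : ℝ)⁻¹ * (1 + v ^ 2)⁻¹ := by
          apply mul_le_mul_of_nonneg_left _ (by positivity)
          apply inv_anti₀ (by positivity)
          linarith
        _ ≤ _ := mul_le_mul_of_nonneg_left (majorant_bounds v).1 (by positivity)
    have hfin := (hle2.trans hle).trans hx.le
    rw [← Finset.sum_mul, mul_one_div, div_le_iff₀ (by positivity)] at hfin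
    linarith

/-! ### Primes in residue classes -/

open ArithmeticFunction.vonMangoldt in
/-- Weighted Chebyshev bounds in residue classes, with constants independent of the modulus. -/
lemma chebyshev_residueClass : ∃ c > 0, ∃ C > 0, ∀ (q : ℕ) [NeZero q] (a : ZMod q), IsUnit a →
    ∀ᶠ x : ℕ in atTop,
      c * (q.totient : ℝ)⁻¹ * x ≤ ∑ n ∈ Finset.Icc 1 x, residueClass a n ∧
      ∑ n ∈ Finset.Icc 1 x, residueClass a n ≤ C * (q.totient : ℝ)⁻¹ * x := by
  obtain ⟨c, hc, C, hC, h⟩ := chebyshev_of_LSeries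
  refine ⟨c, hc, C, hC, fun q _ a ha ↦ ?_⟩
  refine h (residueClass a) (residueClass_nonneg a) (fun s hs ↦ ?_) _
    (by have := Nat.totient_pos.mpr (NeZero.pos q); positivity)
    (LFunctionResidueClassAux a) (continuousOn_LFunctionResidueClassAux a) fun s hs ↦ ?_
  · exact LSeriesSummable_of_abscissaOfAbsConv_lt_re
      ((abscissaOfAbsConv_residueClass_le_one a).trans_lt (by exact_mod_cast hs))
  · rw [eqOn_LFunctionResidueClassAux ha (by exact hs)]
    simp

/-- Primes up to `x` in the residue class `a`. -/
def classPrimes {q : ℕ} (a : ZMod q) (x : ℕ) : Finset ℕ :=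
  {p ∈ Finset.Icc 1 x | p.Prime ∧ (p : ZMod q) = a}

lemma eventually_sqrt_le {ε : ℝ} (hε : 0 < ε) :
    ∀ᶠ x : ℕ in atTop, √(x : ℝ) ≤ ε * (x / Real.log x) := by
  have h := (isLittleO_log_rpow_atTop (show (0 : ℝ) < 1 / 2 by norm_num)).bound hε
  have h2 := tendsto_natCast_atTop_atTop.eventually h
  filter_upwards [h2, eventually_ge_atTop 2] with x hx hx2
  have hx2' : (2 : ℝ) ≤ x := by exact_mod_cast hx2
  have hlog : 0 < Real.log x := Real.log_pos (by linarith)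
  rw [← Real.sqrt_eq_rpow, Real.norm_of_nonneg hlog.le, Real.norm_of_nonneg (Real.sqrt_nonneg _)] at hx
  rw [← mul_div_assoc, le_div_iff₀ hlog]
  calc √(x : ℝ) * Real.log x ≤ √(x : ℝ) * (ε * √(x : ℝ)) :=
        mul_le_mul_of_nonneg_left hx (Real.sqrt_nonneg _)
    _ = ε * (√(x : ℝ) * √(x : ℝ)) := by ring
    _ = _ := by rw [Real.mul_self_sqrt (by positivity)]

open ArithmeticFunction.vonMangoldt ArithmeticFunction in
/-- Primes contribute at most `log x` each; the proper prime powers contribute at most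
`ψ(x) - θ(x)`. -/
lemma sum_residueClass_le {q : ℕ} (a : ZMod q) {x : ℕ} (hx : 1 ≤ x) :
    ∑ n ∈ Finset.Icc 1 x, residueClass a n ≤
      (classPrimes a x).card * Real.log x + 2 * √(x : ℝ) * Real.log x := by
  have hsub := Chebyshev.psi_sub_theta_le (x := x) (by exact_mod_cast hx)
  rw [Chebyshev.psi_sub_theta_eq_sum_not_prime, Nat.floor_natCast] at hsub
  rw [← Finset.sum_filter_add_sum_filter_not _ (fun n : ℕ ↦ n.Prime)]
  refine add_le_add ?_ (le_trans ?_ hsub)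
  · rw [← nsmul_eq_mul, ← Finset.sum_const, classPrimes, ← Finset.filter_filter]
    rw [Finset.sum_filter (fun p : ℕ ↦ (p : ZMod q) = a)]
    refine Finset.sum_le_sum fun n hn ↦ ?_
    simp only [Finset.mem_filter, Finset.mem_Icc] at hn
    simp only [residueClass, Set.indicator, Set.mem_ofPred_eq]
    split_ifs
    · rw [vonMangoldt_apply_prime hn.2]
      exact Real.log_le_log (by exact_mod_cast hn.1.1) (by exact_mod_cast hn.1.2)
    · exact le_rfl
  · refine le_of_le_of_eq (Finset.sum_le_sum fun n _ ↦ residueClass_le a n) ?_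
    rfl

open ArithmeticFunction.vonMangoldt ArithmeticFunction in
/-- Each prime above `√x` carries weight at least `(log x) / 2`. -/
lemma card_classPrimes_le {q : ℕ} (a : ZMod q) {x : ℕ} (hx : 2 ≤ x) :
    ((classPrimes a x).card : ℝ) ≤
      √(x : ℝ) + 2 * (∑ n ∈ Finset.Icc 1 x, residueClass a n) / Real.log x := by
  have hx1 : (1 : ℝ) < x := by exact_mod_cast hx
  have hlog : 0 < Real.log x := Real.log_pos hx1
  have hsub : classPrimes a x ⊆ Finset.Icc 1 (Nat.sqrt x) ∪
      (classPrimes a x).filter (fun p ↦ Nat.sqrt x < p) := by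
    intro p hp
    have hp' := hp
    simp only [classPrimes, Finset.mem_filter, Finset.mem_Icc] at hp
    simp only [Finset.mem_union, Finset.mem_Icc, Finset.mem_filter]
    by_cases h : Nat.sqrt x < p
    · exact Or.inr ⟨hp', h⟩
    · exact Or.inl ⟨hp.1.1, by omega⟩
  have hcard : ((classPrimes a x).card : ℝ) ≤ (Nat.sqrt x : ℝ) +
      ((classPrimes a x).filter (fun p ↦ Nat.sqrt x < p)).card := by
    have := (Finset.card_le_card hsub).trans (Finset.card_union_le _ _)
    rw [Nat.card_Icc, Nat.add_sub_cancel] at this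
    exact_mod_cast this
  refine hcard.trans (add_le_add Real.nat_sqrt_le_real_sqrt ?_)
  rw [le_div_iff₀ hlog]
  have : ((classPrimes a x).filter (fun p ↦ Nat.sqrt x < p)).card * (Real.log x / 2) ≤
      ∑ n ∈ Finset.Icc 1 x, residueClass a n := by
    rw [← nsmul_eq_mul, ← Finset.sum_const]
    refine (Finset.sum_le_sum (g := fun n ↦ residueClass a n) fun p hp ↦ ?_).trans
      (Finset.sum_le_sum_of_subset_of_nonneg ?_ fun n _ _ ↦ residueClass_nonneg a n)
    · simp only [classPrimes, Finset.mem_filter, Finset.mem_Icc] at hp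
      simp only [residueClass, Set.indicator, Set.mem_ofPred_eq, if_pos hp.1.2.2]
      rw [vonMangoldt_apply_prime hp.1.2.1]
      have h1 : (x : ℝ) ≤ (p : ℝ) ^ 2 := by
        have := Nat.sqrt_lt'.1 hp.2
        exact_mod_cast this.le
      have h2 := Real.log_le_log (by linarith) h1
      rw [Real.log_pow] at h2
      push_cast at h2
      linarith
    · exact (Finset.filter_subset _ _).trans (Finset.filter_subset _ _)
  linarith

/-- Chebyshev's bounds for primes in residue classes, with constants independent of the
modulus. -/
theorem card_classPrimes_bounds : ∃ c > 0, ∃ C > 0, ∀ (q : ℕ) [NeZero q] (a : ZMod q), IsUnit a →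
    ∀ᶠ x : ℕ in atTop,
      c * (q.totient : ℝ)⁻¹ * (x / Real.log x) ≤ (classPrimes a x).card ∧
      ((classPrimes a x).card : ℝ) ≤ C * (q.totient : ℝ)⁻¹ * (x / Real.log x) := by
  obtain ⟨c, hc, C, hC, h⟩ := chebyshev_residueClass
  refine ⟨c / 2, by positivity, 3 * C, by positivity, fun q _ a ha ↦ ?_⟩
  have hκ : 0 < (q.totient : ℝ)⁻¹ := by
    have := Nat.totient_pos.mpr (NeZero.pos q); positivity
  set κ := (q.totient : ℝ)⁻¹
  filter_upwards [h q a ha, eventually_ge_atTop 2,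
    eventually_sqrt_le (show 0 < c * κ / 4 by positivity),
    eventually_sqrt_le (show 0 < C * κ by positivity)] with x hx hx2 h1 h2
  have hx1 : (1 : ℝ) < x := by exact_mod_cast hx2
  have hlog : 0 < Real.log x := Real.log_pos hx1
  constructor
  · have h3 := hx.1.trans (sum_residueClass_le a (by omega))
    rw [← add_mul, ← div_le_iff₀ hlog] at h3
    have : c * κ * x / Real.log x = c * κ * (x / Real.log x) := by ring
    linarith
  · have h3 := card_classPrimes_le a hx2
    have h4 := div_le_div_of_nonneg_right hx.2 hlog.le
    have : C * κ * x / Real.log x = C * κ * (x / Real.log x) := by ring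
    rw [mul_div_assoc] at h3
    linarith

/-! ### Mertens-type estimates -/

open ArithmeticFunction in
/-- The upper half of Mertens' first theorem, from `log = Λ * ζ` and `ψ(N) = O(N)`. -/
lemma sum_vonMangoldt_div_le {N : ℕ} (hN : 1 ≤ N) :
    ∑ n ∈ Finset.Ioc 0 N, vonMangoldt n / n ≤ Real.log N + 8 := by
  have hN0 : (0 : ℝ) < N := by exact_mod_cast hN
  have h1 : ∑ n ∈ Finset.Ioc 0 N, Real.log n = ∑ n ∈ Finset.Ioc 0 N, vonMangoldt n * (N / n : ℕ) := by
    rw [← sum_Ioc_mul_zeta_eq_sum, vonMangoldt_mul_zeta]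
    rfl
  have h2 : ∑ n ∈ Finset.Ioc 0 N, Real.log n ≤ N * Real.log N := by
    have := Finset.sum_le_card_nsmul (Finset.Ioc 0 N) (fun n : ℕ ↦ Real.log n) (Real.log N)
      fun n hn ↦ by
        rw [Finset.mem_Ioc] at hn
        exact Real.log_le_log (by exact_mod_cast hn.1) (by exact_mod_cast hn.2)
    simpa using this
  have h3 : ∑ n ∈ Finset.Ioc 0 N, vonMangoldt n * (N / n - 1) ≤ N * Real.log N := by
    refine le_trans (Finset.sum_le_sum fun n hn ↦ ?_) (h1 ▸ h2)
    refine mul_le_mul_of_nonneg_left ?_ vonMangoldt_nonneg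
    have := Nat.lt_floor_add_one ((N : ℝ) / n)
    rw [Nat.floor_div_natCast, Nat.floor_natCast] at this
    linarith
  have h4 : ∑ n ∈ Finset.Ioc 0 N, vonMangoldt n ≤ 8 * N := by
    have := Chebyshev.psi_le_const_mul_self hN0.le
    rw [Chebyshev.psi, Nat.floor_natCast] at this
    have h5 : Real.log 4 ≤ 4 := by
      have := Real.log_le_sub_one_of_pos (show (0 : ℝ) < 4 by norm_num)
      linarith
    nlinarith
  simp only [mul_sub, mul_one, Finset.sum_sub_distrib] at h3
  have h6 : ∑ n ∈ Finset.Ioc 0 N, vonMangoldt n * ((N : ℝ) / n) =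
      N * ∑ n ∈ Finset.Ioc 0 N, vonMangoldt n / n := by
    rw [Finset.mul_sum]
    exact Finset.sum_congr rfl fun n _ ↦ by ring
  rw [h6] at h3
  refine le_of_mul_le_mul_left ?_ hN0
  linarith

lemma sum_log_div_primesBelow_le {N : ℕ} (hN : 1 ≤ N) :
    ∑ p ∈ N.primesBelow, Real.log p / p ≤ Real.log N + 8 := by
  refine le_trans ?_ (sum_vonMangoldt_div_le hN)
  refine (Finset.sum_le_sum (g := fun n : ℕ ↦ ArithmeticFunction.vonMangoldt n / n) fun p hp ↦ ?_).trans
    (Finset.sum_le_sum_of_subset_of_nonneg ?_ fun n _ _ ↦ ?_)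
  · rw [ArithmeticFunction.vonMangoldt_apply_prime (Nat.prime_of_mem_primesBelow hp)]
  · intro p hp
    have := Nat.lt_of_mem_primesBelow hp
    have := (Nat.prime_of_mem_primesBelow hp).pos
    simp only [Finset.mem_Ioc]
    omega
  · have := ArithmeticFunction.vonMangoldt_nonneg (n := n)
    positivity

/-- The completely multiplicative function `n ↦ n ^ (-s)`. -/
def rpowNegHom (s : ℝ) : ℕ →* ℝ where
  toFun n := ((n : ℝ) ^ s)⁻¹
  map_one' := by simp
  map_mul' m n := by
    simp only [Nat.cast_mul]
    rw [Real.mul_rpow (by positivity) (by positivity), mul_inv]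

lemma rpowNegHom_apply (s : ℝ) (n : ℕ) : rpowNegHom s n = ((n : ℝ) ^ s)⁻¹ := rfl

lemma prod_inv_rpow_le {s : ℝ} (hs : 1 < s) (N : ℕ) :
    ∏ p ∈ N.primesBelow, (1 - ((p : ℝ) ^ s)⁻¹)⁻¹ ≤ ∑' n : ℕ, 1 / (n : ℝ) ^ s := by
  have hsum : Summable (rpowNegHom s) := Real.summable_nat_rpow_inv.2 hs
  have h := EulerProduct.prod_primesBelow_geometric_eq_tsum_smoothNumbers hsum N
  simp only [rpowNegHom_apply] at h
  rw [h]
  simp only [one_div]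
  exact hsum.tsum_subtype_le (fun n : ℕ ↦ ((n : ℝ) ^ s)⁻¹) _ (fun n ↦ by positivity)

/-- The Euler product over `p < N` is the sum of `1 / m` over `N`-smooth `m`, which include all
`1 ≤ m < N`. -/
lemma log_le_prod_inv {N : ℕ} (hN : 1 ≤ N) :
    Real.log N ≤ ∏ p ∈ N.primesBelow, (1 - (p : ℝ)⁻¹)⁻¹ := by
  have h := EulerProduct.summable_and_hasSum_smoothNumbers_prod_primesBelow_geometric
    (f := rpowNegHom 1) (fun {p} hp ↦ by
      rw [rpowNegHom_apply, Real.rpow_one, norm_inv, RCLike.norm_natCast]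
      exact inv_lt_one_of_one_lt₀ (by exact_mod_cast hp.one_lt)) N
  simp only [rpowNegHom_apply, Real.rpow_one] at h
  have h1 := log_add_one_le_harmonic (N - 1)
  rw [Nat.sub_add_cancel hN, harmonic_eq_sum_Icc] at h1
  refine h1.trans ?_
  push_cast
  have hmem : ∀ n ∈ Finset.Icc 1 (N - 1), n ∈ N.smoothNumbers := fun n hn ↦ by
    rw [Finset.mem_Icc] at hn
    exact Nat.mem_smoothNumbers_of_lt (by omega) (by omega)
  rw [← Finset.sum_subtype_of_mem (fun n : ℕ ↦ (n : ℝ)⁻¹) hmem]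
  exact sum_le_hasSum _ (fun _ _ ↦ by positivity) h.2

/-- Passing from the exponent `1 + ε` to `1` in one Euler factor. -/
lemma inv_one_sub_inv_le {p : ℕ} (hp : p.Prime) {ε : ℝ} (hε : 0 < ε) :
    (1 - (p : ℝ)⁻¹)⁻¹ ≤
      (1 - ((p : ℝ) ^ (1 + ε))⁻¹)⁻¹ * Real.exp (2 * ε * (Real.log p / p)) := by
  have hp2 : (2 : ℝ) ≤ p := by exact_mod_cast hp.two_le
  have hp0 : (0 : ℝ) < p := by linarith
  set u := (p : ℝ)⁻¹ with hu
  have hu0 : 0 < u := by positivity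
  have hu2 : u ≤ 1 / 2 := by
    rw [hu, one_div]; gcongr
  have hv : ((p : ℝ) ^ (1 + ε))⁻¹ = u * Real.exp (-(ε * Real.log p)) := by
    rw [Real.rpow_add hp0, Real.rpow_one, mul_inv, Real.exp_neg, Real.rpow_def_of_pos hp0, mul_comm ε]
  rw [hv]
  set t := ε * Real.log p with ht
  have ht0 : 0 < t := mul_pos hε (Real.log_pos (by linarith))
  have he : 1 - t ≤ Real.exp (-t) := Real.one_sub_le_exp_neg t
  have he1 : Real.exp (-t) < 1 := by rw [Real.exp_lt_one_iff]; linarith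
  have h2 : 2 * ε * (Real.log p / p) = 2 * t * u := by rw [ht, hu]; ring
  rw [h2]
  have h3 : 2 * t * u + 1 ≤ Real.exp (2 * t * u) := Real.add_one_le_exp _
  have h4 : u * Real.exp (-t) < 1 := by nlinarith
  rw [← div_eq_inv_mul, inv_eq_one_div, div_le_div_iff₀ (by linarith) (by linarith), one_mul]
  have h5 : (2 * t * u + 1) * (1 - u) ≤ Real.exp (2 * t * u) * (1 - u) :=
    mul_le_mul_of_nonneg_right h3 (by linarith)
  have h6 : u * (1 - t) ≤ u * Real.exp (-t) := mul_le_mul_of_nonneg_left he hu0.le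
  nlinarith [mul_pos ht0 hu0]

/-- The lower half of Mertens' third theorem, via the Euler product at `1 + 1 / log N`. -/
lemma eventually_prod_inv_le :
    ∀ᶠ N : ℕ in atTop, ∏ p ∈ N.primesBelow, (1 - (p : ℝ)⁻¹)⁻¹ ≤ 2 * Real.exp 4 * Real.log N := by
  have hlogN : Tendsto (fun N : ℕ ↦ Real.log N) atTop atTop :=
    Real.tendsto_log_atTop.comp tendsto_natCast_atTop_atTop
  have ht : Tendsto (fun N : ℕ ↦ 1 + (Real.log N)⁻¹) atTop (𝓝[>] 1) := by
    refine tendsto_nhdsWithin_iff.2 ⟨?_, ?_⟩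
    · simpa using tendsto_const_nhds.add (tendsto_inv_atTop_zero.comp hlogN)
    · filter_upwards [hlogN.eventually_gt_atTop 0] with N hN
      have : 0 < (Real.log N)⁻¹ := by positivity
      simpa using this
  have hz := (tendsto_sub_mul_tsum_nat_rpow.comp ht).eventually_le_const (show (1 : ℝ) < 2 by norm_num)
  filter_upwards [hz, hlogN.eventually_ge_atTop 8, eventually_ge_atTop 1] with N h1 h2 h3
  set L := Real.log N
  have hL : 0 < L := by linarith
  have hε : 0 < L⁻¹ := by positivity
  simp only [Function.comp_apply, add_sub_cancel_left] at h1
  rw [inv_mul_le_iff₀ hL] at h1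
  have hpos : ∀ p ∈ N.primesBelow, 0 ≤ (1 - (p : ℝ)⁻¹)⁻¹ := fun p hp ↦ by
    have : (1 : ℝ) ≤ p := by exact_mod_cast (Nat.prime_of_mem_primesBelow hp).one_le
    have := inv_le_one_of_one_le₀ this
    exact inv_nonneg.2 (by linarith)
  calc ∏ p ∈ N.primesBelow, (1 - (p : ℝ)⁻¹)⁻¹
      ≤ ∏ p ∈ N.primesBelow, ((1 - ((p : ℝ) ^ (1 + L⁻¹))⁻¹)⁻¹ *
          Real.exp (2 * L⁻¹ * (Real.log p / p))) :=
        Finset.prod_le_prod hpos fun p hp ↦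
          inv_one_sub_inv_le (Nat.prime_of_mem_primesBelow hp) hε
    _ = (∏ p ∈ N.primesBelow, (1 - ((p : ℝ) ^ (1 + L⁻¹))⁻¹)⁻¹) *
          Real.exp (2 * L⁻¹ * ∑ p ∈ N.primesBelow, Real.log p / p) := by
        rw [Finset.prod_mul_distrib, ← Real.exp_sum, Finset.mul_sum]
    _ ≤ (L * 2) * Real.exp 4 := by
        have h4 := sum_log_div_primesBelow_le h3
        refine mul_le_mul ((prod_inv_rpow_le (by linarith) N).trans h1) ?_ (by positivity)
          (by positivity)
        rw [Real.exp_le_exp, mul_assoc, mul_comm, mul_assoc, inv_mul_le_iff₀ hL]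
        linarith
    _ = _ := by ring

/-- The product telescopes. -/
lemma prod_one_sub_inv_sq (n : ℕ) :
    ∏ k ∈ Finset.range n, (1 - (((k : ℝ) + 2) ^ 2)⁻¹) = ((n : ℝ) + 2) / (2 * (n + 1)) := by
  induction n with
  | zero => norm_num
  | succ n ih =>
    rw [Finset.prod_range_succ, ih]
    have h2 : (n : ℝ) + 2 ≠ 0 := by positivity
    have h1 : (n : ℝ) + 1 ≠ 0 := by positivity
    push_cast
    field_simp
    ring

lemma half_le_prod_one_sub_inv_sq (N : ℕ) :
    1 / 2 ≤ ∏ p ∈ N.primesBelow.erase 2, (1 - (((p : ℝ) - 1) ^ 2)⁻¹) := by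
  have h1 : ∀ k : ℕ, 0 ≤ 1 - (((k : ℝ) + 2) ^ 2)⁻¹ ∧ 1 - (((k : ℝ) + 2) ^ 2)⁻¹ ≤ 1 := fun k ↦ by
    have : (1 : ℝ) ≤ ((k : ℝ) + 2) ^ 2 := by nlinarith [(Nat.cast_nonneg k : (0 : ℝ) ≤ k)]
    have h2 := inv_le_one_of_one_le₀ this
    have h3 : 0 ≤ (((k : ℝ) + 2) ^ 2)⁻¹ := by positivity
    constructor <;> linarith
  have hmem : ∀ p ∈ N.primesBelow.erase 2, 3 ≤ p ∧ p < N := fun p hp ↦ by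
    rw [Finset.mem_erase] at hp
    have := (Nat.prime_of_mem_primesBelow hp.2).two_le
    have := Nat.lt_of_mem_primesBelow hp.2
    omega
  have himg : ∏ p ∈ N.primesBelow.erase 2, (1 - (((p : ℝ) - 1) ^ 2)⁻¹) =
      ∏ k ∈ ((N.primesBelow.erase 2).image (fun p : ℕ ↦ p - 3) : Finset ℕ), (1 - (((k : ℝ) + 2) ^ 2)⁻¹) := by
    rw [Finset.prod_image fun a ha b hb hab ↦ by
      have := hmem a ha
      have := hmem b hb
      omega]
    refine Finset.prod_congr rfl fun p hp ↦ ?_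
    rw [Nat.cast_sub (hmem p hp).1]
    push_cast
    ring
  rw [himg]
  have hsub : (N.primesBelow.erase 2).image (fun p : ℕ ↦ p - 3) ⊆ Finset.range N := fun k hk ↦ by
    obtain ⟨p, hp, rfl⟩ := Finset.mem_image.1 hk
    have := hmem p hp
    simp only [Finset.mem_range]
    omega
  refine le_trans ?_ (Finset.prod_le_prod_of_subset_of_le_one hsub (fun k _ ↦ (h1 k).1)
    fun k _ _ ↦ (h1 k).2)
  rw [prod_one_sub_inv_sq, div_le_div_iff₀ (by norm_num) (by positivity)]
  linarith

/-- The left side is the proportion of residues `a ≠ 1` among the units modulo `p`; the second factor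
on the right contributes a convergent product. -/
lemma factor_eq {p : ℕ} (hp : 3 ≤ p) :
    ((p : ℝ) - 2) / (p - 1) = (1 - (p : ℝ)⁻¹) * (1 - (((p : ℝ) - 1) ^ 2)⁻¹) := by
  have : (3 : ℝ) ≤ p := by exact_mod_cast hp
  have h1 : (p : ℝ) - 1 ≠ 0 := by linarith
  field_simp
  ring

/-- Mertens-type bounds for the density of residues that are units and stay units after
subtracting one. -/
theorem prod_density_bounds : ∃ c > 0, ∃ C > 0, ∃ y₀ : ℝ, 1 < y₀ ∧ ∀ y : ℝ, y₀ ≤ y →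
    c / Real.log y ≤ ∏ p ∈ (Nat.primesBelow ⌈y⌉₊).erase 2, (((p : ℝ) - 2) / (p - 1)) ∧
    ∏ p ∈ (Nat.primesBelow ⌈y⌉₊).erase 2, (((p : ℝ) - 2) / (p - 1)) ≤ C / Real.log y := by
  obtain ⟨N₀, hN₀⟩ := eventually_atTop.1 eventually_prod_inv_le
  refine ⟨(4 * Real.exp 4)⁻¹, by positivity, 2, by norm_num, max N₀ 3, by
    exact lt_max_of_lt_right (by norm_num), fun y hy ↦ ?_⟩
  have hy3 : (3 : ℝ) ≤ y := (le_max_right _ _).trans hy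
  have hyN : y ≤ (⌈y⌉₊ : ℝ) := Nat.le_ceil y
  have hNy : (⌈y⌉₊ : ℝ) < y + 1 := Nat.ceil_lt_add_one (by linarith)
  set N := ⌈y⌉₊
  have hN : N₀ ≤ N := by
    have := (le_max_left _ _).trans (hy.trans hyN)
    exact_mod_cast this
  have hN3 : 3 ≤ N := by
    have := hy3.trans hyN
    exact_mod_cast this
  have hup := hN₀ N hN
  have hlow := log_le_prod_inv (show 1 ≤ N by omega)
  rw [Finset.prod_inv_distrib] at hup hlow
  have hlogy : 0 < Real.log y := Real.log_pos (by linarith)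
  have hlogN : Real.log y ≤ Real.log N := Real.log_le_log (by linarith) hyN
  have hlogN2 : Real.log N ≤ 2 * Real.log y := by
    have : Real.log N ≤ Real.log (y ^ 2) := Real.log_le_log (by linarith) (by nlinarith)
    rw [Real.log_pow] at this
    exact_mod_cast this
  have h2mem : 2 ∈ N.primesBelow := Nat.mem_primesBelow.2 ⟨by omega, Nat.prime_two⟩
  have hE := Finset.mul_prod_erase N.primesBelow (fun p : ℕ ↦ 1 - (p : ℝ)⁻¹) h2mem
  set E := ∏ p ∈ N.primesBelow, (1 - (p : ℝ)⁻¹)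
  set E' := ∏ p ∈ N.primesBelow.erase 2, (1 - (p : ℝ)⁻¹)
  have hE2 : E' = 2 * E := by
    rw [← hE]
    norm_num
    ring
  have hEpos : 0 < E := by
    have : 0 < E⁻¹ := by linarith
    exact inv_pos.1 this
  have hmem : ∀ p ∈ N.primesBelow.erase 2, 3 ≤ p := fun p hp ↦ by
    rw [Finset.mem_erase] at hp
    have := (Nat.prime_of_mem_primesBelow hp.2).two_le
    omega
  have hQ := half_le_prod_one_sub_inv_sq N
  have hprod : ∏ p ∈ N.primesBelow.erase 2, (((p : ℝ) - 2) / (p - 1)) =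
      E' * ∏ p ∈ N.primesBelow.erase 2, (1 - (((p : ℝ) - 1) ^ 2)⁻¹) := by
    rw [← Finset.prod_mul_distrib]
    exact Finset.prod_congr rfl fun p hp ↦ factor_eq (hmem p hp)
  have hQ1 : ∏ p ∈ N.primesBelow.erase 2, (1 - (((p : ℝ) - 1) ^ 2)⁻¹) ≤ 1 := by
    refine Finset.prod_le_one (fun p hp ↦ ?_) (fun p hp ↦ ?_)
    · have : (3 : ℝ) ≤ p := by exact_mod_cast hmem p hp
      have : (1 : ℝ) ≤ ((p : ℝ) - 1) ^ 2 := by nlinarith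
      have := inv_le_one_of_one_le₀ this
      linarith
    · have : 0 ≤ (((p : ℝ) - 1) ^ 2)⁻¹ := by positivity
      linarith
  rw [hprod, hE2]
  set Q := ∏ p ∈ N.primesBelow.erase 2, (1 - (((p : ℝ) - 1) ^ 2)⁻¹)
  constructor
  · have h1 : 1 ≤ 2 * Real.exp 4 * Real.log N * E := by
      have := mul_le_mul_of_nonneg_right hup hEpos.le
      rwa [inv_mul_cancel₀ hEpos.ne'] at this
    have h2 : 1 ≤ 4 * Real.exp 4 * Real.log y * E := by
      refine h1.trans (mul_le_mul_of_nonneg_right ?_ hEpos.le)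
      nlinarith [Real.exp_pos 4]
    rw [div_le_iff₀ hlogy, inv_le_iff_one_le_mul₀ (by positivity)]
    have h3 : E ≤ 2 * E * Q := by nlinarith
    calc 1 ≤ 4 * Real.exp 4 * Real.log y * E := h2
      _ ≤ 4 * Real.exp 4 * Real.log y * (2 * E * Q) :=
        mul_le_mul_of_nonneg_left h3 (by positivity)
      _ = _ := by ring
  · have h1 : Real.log y * E ≤ 1 := by
      have := mul_le_mul_of_nonneg_right (hlogN.trans hlow) hEpos.le
      rwa [inv_mul_cancel₀ hEpos.ne'] at this
    rw [le_div_iff₀ hlogy]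
    have h3 : 2 * E * Q ≤ 2 * E := by nlinarith
    nlinarith

/-! ### Rough primes and residues modulo the product of small odd primes -/

open scoped Classical in
/-- Residues `a` modulo `M` such that both `a` and `a - 1` are units. -/
def goodResidues (M : ℕ) [NeZero M] : Finset (ZMod M) :=
  {a | IsUnit a ∧ IsUnit (a - 1)}

lemma mem_goodResidues {M : ℕ} [NeZero M] {a : ZMod M} :
    a ∈ goodResidues M ↔ IsUnit a ∧ IsUnit (a - 1) := by
  simp [goodResidues]

lemma card_goodResidues_prime {p : ℕ} [NeZero p] (hp : p.Prime) :
    (goodResidues p).card = p - 2 := by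
  have : Fact p.Prime := ⟨hp⟩
  have h : goodResidues p = (Finset.univ.erase 0).erase 1 := by
    ext a
    simp only [mem_goodResidues, isUnit_iff_ne_zero, Finset.mem_erase, Finset.mem_univ, and_true,
      sub_ne_zero]
    exact and_comm
  rw [h, Finset.card_erase_of_mem (by simp), Finset.card_erase_of_mem (by simp), Finset.card_univ,
    ZMod.card]
  omega

section
variable {T : Finset ℕ}

lemma pairwise_coprime_of_primes (hT : ∀ p ∈ T, p.Prime) :
    Pairwise (Function.onFun Nat.Coprime fun i : T ↦ (i : ℕ)) := fun i j hij ↦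
  (Nat.coprime_primes (hT i i.2) (hT j j.2)).2 fun h ↦ hij (Subtype.ext h)

/-- The Chinese remainder theorem counts the good residues. -/
lemma card_goodResidues (hT : ∀ p ∈ T, p.Prime) [NeZero (∏ i : T, (i : ℕ))] :
    (goodResidues (∏ i : T, (i : ℕ))).card = ∏ p ∈ T, (p - 2) := by
  classical
  have : ∀ i : T, NeZero (i : ℕ) := fun i ↦ ⟨(hT i i.2).ne_zero⟩
  let e := ZMod.prodEquivPi (fun i : T ↦ (i : ℕ)) (pairwise_coprime_of_primes hT)
  have h : (goodResidues (∏ i : T, (i : ℕ))).card =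
      (Fintype.piFinset fun i : T ↦ goodResidues (i : ℕ)).card := by
    refine Finset.card_equiv e.toEquiv fun a ↦ ?_
    simp only [Fintype.mem_piFinset, mem_goodResidues]
    rw [← MulEquiv.isUnit_map e, ← MulEquiv.isUnit_map e (x := a - 1), map_sub, map_one, Pi.isUnit_iff,
      Pi.isUnit_iff, ← forall_and]
    rfl
  rw [h, Fintype.card_piFinset, ← Finset.prod_coe_sort T]
  exact Finset.prod_congr rfl fun i _ ↦ card_goodResidues_prime (hT i i.2)

lemma totient_prod_primes (hT : ∀ p ∈ T, p.Prime) :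
    (∏ p ∈ T, p).totient = ∏ p ∈ T, (p - 1) := by
  induction T using Finset.induction_on with
  | empty => simp
  | insert a s ha ih =>
    have hs : ∀ p ∈ s, p.Prime := fun p hp ↦ hT p (Finset.mem_insert_of_mem hp)
    have hap := hT a (Finset.mem_insert_self a s)
    rw [Finset.prod_insert ha, Finset.prod_insert ha, Nat.totient_mul, ih hs, Nat.totient_prime hap]
    refine Nat.Coprime.prod_right fun p hp ↦ ?_
    exact (Nat.coprime_primes hap (hs p hp)).2 fun h ↦ ha (h ▸ hp)

lemma density_eq (hT : ∀ p ∈ T, p.Prime) [NeZero (∏ i : T, (i : ℕ))] :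
    ((goodResidues (∏ i : T, (i : ℕ))).card : ℝ) * ((∏ i : T, (i : ℕ)).totient : ℝ)⁻¹ =
      ∏ p ∈ T, (((p : ℝ) - 2) / (p - 1)) := by
  rw [card_goodResidues hT, Finset.prod_coe_sort T (fun p ↦ p), totient_prod_primes hT,
    ← div_eq_mul_inv, Finset.prod_div_distrib]
  push_cast
  congr 1 <;> refine Finset.prod_congr rfl fun p hp ↦ ?_
  · rw [Nat.cast_sub (hT p hp).two_le]; norm_num
  · rw [Nat.cast_sub (hT p hp).one_le]; norm_num

end

/-- A prime not dividing the product of the odd primes below `y` is rough exactly when its residue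
modulo that product is good. -/
lemma isRough_iff {y : ℝ} {p : ℕ} (hp : p.Prime) {M : ℕ} [NeZero M]
    (hM : ∀ q : ℕ, q.Prime → (q ∣ M ↔ (q : ℝ) < y ∧ q ≠ 2)) :
    IsRough y p ↔ IsUnit ((p : ZMod M) - 1) := by
  have h1 : (p : ZMod M) - 1 = ((p - 1 : ℕ) : ZMod M) := by
    rw [Nat.cast_sub hp.one_le, Nat.cast_one]
  rw [h1, ZMod.isUnit_iff_coprime]
  constructor
  · intro h
    refine Nat.coprime_of_dvd fun q hq hq1 hqM ↦ ?_
    have h2 := (hM q hq).1 hqM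
    exact absurd (h q hq hq1 h2.2) (not_le.2 h2.1)
  · intro h q hq hq1 hq2
    by_contra hlt
    exact Nat.not_coprime_of_dvd_of_dvd hq.one_lt hq1 ((hM q hq).2 ⟨not_le.1 hlt, hq2⟩) h

lemma card_biUnion_classPrimes {M : ℕ} (S : Finset (ZMod M)) (x : ℕ) :
    (S.biUnion fun a ↦ classPrimes a x).card = ∑ a ∈ S, (classPrimes a x).card := by
  refine Finset.card_biUnion fun a _ b _ hab ↦ Finset.disjoint_left.2 fun p hpa hpb ↦ hab ?_
  simp only [classPrimes, Finset.mem_filter] at hpa hpb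
  exact hpa.2.2.symm.trans hpb.2.2

lemma finite_rough (y : ℝ) (x : ℕ) : {p : ℕ | p ≤ x ∧ p.Prime ∧ IsRough y p}.Finite :=
  (Set.finite_Iic x).subset fun _ hp ↦ hp.1

lemma sum_card_le_ncard_rough {y : ℝ} {M : ℕ} [NeZero M]
    (hM : ∀ q : ℕ, q.Prime → (q ∣ M ↔ (q : ℝ) < y ∧ q ≠ 2)) (x : ℕ) :
    ∑ a ∈ goodResidues M, (classPrimes a x).card ≤
      {p : ℕ | p ≤ x ∧ p.Prime ∧ IsRough y p}.ncard := by
  rw [← card_biUnion_classPrimes, ← Set.ncard_coe_finset]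
  refine Set.ncard_le_ncard (fun p hp ↦ ?_) (finite_rough y x)
  simp only [Finset.coe_biUnion, Set.mem_iUnion, Finset.mem_coe, classPrimes, Finset.mem_filter,
    Finset.mem_Icc] at hp
  obtain ⟨a, ha, ⟨_, hpx⟩, hp, rfl⟩ := hp
  exact ⟨hpx, hp, (isRough_iff hp hM).2 (mem_goodResidues.1 ha).2⟩

/-- The first term on the right accounts for the primes dividing `M`. -/
lemma ncard_rough_le {y : ℝ} {M : ℕ} [NeZero M]
    (hM : ∀ q : ℕ, q.Prime → (q ∣ M ↔ (q : ℝ) < y ∧ q ≠ 2)) (x : ℕ) :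
    {p : ℕ | p ≤ x ∧ p.Prime ∧ IsRough y p}.ncard ≤
      M + ∑ a ∈ goodResidues M, (classPrimes a x).card := by
  have hle : ((Finset.Icc 1 M ∪ (goodResidues M).biUnion fun a ↦ classPrimes a x) : Finset ℕ).card ≤
      M + ∑ a ∈ goodResidues M, (classPrimes a x).card := by
    refine (Finset.card_union_le _ _).trans ?_
    rw [card_biUnion_classPrimes, Nat.card_Icc, Nat.add_sub_cancel]
  refine le_trans ?_ hle
  rw [← Set.ncard_coe_finset]
  refine Set.ncard_le_ncard (fun p hp ↦ ?_) (Finset.finite_toSet _)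
  obtain ⟨hpx, hp, hr⟩ := hp
  simp only [Finset.coe_union, Set.mem_union, Finset.mem_coe, Finset.mem_Icc, Finset.mem_biUnion,
    classPrimes, Finset.mem_filter]
  by_cases hpM : p ∣ M
  · exact Or.inl ⟨hp.one_le, Nat.le_of_dvd (NeZero.pos M) hpM⟩
  · exact Or.inr ⟨p, mem_goodResidues.2 ⟨(ZMod.isUnit_iff_coprime p M).2
      ((Nat.Prime.coprime_iff_not_dvd hp).2 hpM), (isRough_iff hp hM).1 hr⟩,
      ⟨hp.one_le, hpx⟩, hp, rfl⟩

/-- In modulus `1` there is a single class, and `0` is a unit in it. -/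
lemma ncard_primes_eq (x : ℕ) :
    {p : ℕ | p ≤ x ∧ p.Prime}.ncard = (classPrimes (0 : ZMod 1) x).card := by
  rw [← Set.ncard_coe_finset]
  congr 1
  ext p
  simp only [classPrimes, Set.mem_ofPred_eq, Finset.coe_filter, Finset.mem_Icc]
  exact ⟨fun h ↦ ⟨⟨h.2.one_le, h.1⟩, h.2, Subsingleton.elim _ _⟩, fun h ↦ ⟨h.1.2, h.2.1⟩⟩

end RoughPrimes

theorem stmt19 :
    ∃ c₁ : ℝ, 0 < c₁ ∧ ∃ c₂ : ℝ, 0 < c₂ ∧ ∃ y₀ : ℝ, ∀ y : ℝ, y₀ ≤ y →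
      ∃ x₀ : ℕ, ∀ x : ℕ, x₀ ≤ x →
        c₁ * ({p : ℕ | p ≤ x ∧ p.Prime}.ncard : ℝ) / Real.log y ≤
            ({p : ℕ | p ≤ x ∧ p.Prime ∧ IsRough y p}.ncard : ℝ) ∧
          ({p : ℕ | p ≤ x ∧ p.Prime ∧ IsRough y p}.ncard : ℝ) ≤
            c₂ * ({p : ℕ | p ≤ x ∧ p.Prime}.ncard : ℝ) / Real.log y := by
  obtain ⟨c, hc, C, hC, hcC⟩ := card_classPrimes_bounds
  obtain ⟨d, hd, D, hD, y₀, hy₀, hdD⟩ := prod_density_bounds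
  refine ⟨c * d / C, by positivity, (C + 1) * D / c, by positivity, y₀, fun y hy ↦ ?_⟩
  have hlogy : 0 < Real.log y := Real.log_pos (by linarith)
  obtain ⟨hlow, hup⟩ := hdD y hy
  set T := (Nat.primesBelow ⌈y⌉₊).erase 2 with hTdef
  have hT : ∀ p ∈ T, p.Prime := fun p hp ↦
    Nat.prime_of_mem_primesBelow (Finset.mem_of_mem_erase hp)
  have : NeZero (∏ i : T, (i : ℕ)) := ⟨Finset.prod_ne_zero_iff.2 fun i _ ↦ (hT i i.2).ne_zero⟩
  have hM : ∀ q : ℕ, q.Prime → (q ∣ ∏ i : T, (i : ℕ) ↔ (q : ℝ) < y ∧ q ≠ 2) := by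
    intro q hq
    rw [Finset.prod_coe_sort T (fun p ↦ p), hq.prime.dvd_finsetProd_iff, ← Nat.lt_ceil]
    constructor
    · rintro ⟨p, hp, hqp⟩
      rw [(Nat.prime_dvd_prime_iff_eq hq (hT p hp)).1 hqp]
      rw [hTdef, Finset.mem_erase, Nat.mem_primesBelow] at hp
      exact ⟨hp.2.1, hp.1⟩
    · intro h
      exact ⟨q, Finset.mem_erase.2 ⟨h.2, Nat.mem_primesBelow.2 ⟨h.1, hq⟩⟩, dvd_rfl⟩
  rw [← density_eq hT] at hlow hup
  set M := ∏ i : T, (i : ℕ)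
  set κ := (M.totient : ℝ)⁻¹
  set s := (goodResidues M).card
  have hsκ : 0 < s * κ := lt_of_lt_of_le (by positivity) hlow
  have hM0 : (0 : ℝ) < M := by exact_mod_cast NeZero.pos M
  have hclass : ∀ᶠ x : ℕ in Filter.atTop, ∀ a ∈ goodResidues M,
      c * κ * (x / Real.log x) ≤ (classPrimes a x).card ∧
      ((classPrimes a x).card : ℝ) ≤ C * κ * (x / Real.log x) :=
    (Filter.eventually_all_finset _).2 fun a ha ↦ hcC M a (mem_goodResidues.1 ha).1
  have hsq : ∀ᶠ x : ℕ in Filter.atTop, 1 ≤ √(x : ℝ) := by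
    filter_upwards [Filter.eventually_ge_atTop 1] with x hx
    exact Real.one_le_sqrt.2 (by exact_mod_cast hx)
  obtain ⟨x₀, hx₀⟩ := Filter.eventually_atTop.1 (hclass.and ((hcC 1 0 (Subsingleton.elim (1 : ZMod 1) 0 ▸ isUnit_one)).and
    (hsq.and (eventually_sqrt_le (div_pos hsκ hM0)))))
  refine ⟨x₀, fun x hx ↦ ?_⟩
  obtain ⟨h1, ⟨h2, h3⟩, h4, h5⟩ := hx₀ x hx
  rw [← ncard_primes_eq, Nat.totient_one, Nat.cast_one, inv_one, mul_one] at h2 h3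
  set X := (x : ℝ) / Real.log x
  set P := ({p : ℕ | p ≤ x ∧ p.Prime}.ncard : ℝ)
  have hL : ((∑ a ∈ goodResidues M, (classPrimes a x).card : ℕ) : ℝ) ≤ _ :=
    Nat.cast_le.2 (sum_card_le_ncard_rough hM x)
  have hU : (_ : ℝ) ≤ ((M + ∑ a ∈ goodResidues M, (classPrimes a x).card : ℕ) : ℝ) :=
    Nat.cast_le.2 (ncard_rough_le hM x)
  push_cast at hL hU
  set R := ({p : ℕ | p ≤ x ∧ p.Prime ∧ IsRough y p}.ncard : ℝ)
  have hsumL := Finset.card_nsmul_le_sum _ (fun a ↦ ((classPrimes a x).card : ℝ)) _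
    fun a ha ↦ (h1 a ha).1
  have hsumU := Finset.sum_le_card_nsmul _ (fun a ↦ ((classPrimes a x).card : ℝ)) _
    fun a ha ↦ (h1 a ha).2
  rw [nsmul_eq_mul] at hsumL hsumU
  have hMX : (M : ℝ) ≤ s * κ * X := by
    have := h4.trans h5
    rw [div_mul_eq_mul_div, le_div_iff₀ hM0] at this
    linarith
  have hX : 0 < X := by
    by_contra hneg
    nlinarith
  constructor
  · have hPX : P / C ≤ X := (div_le_iff₀ hC).2 (by linarith)
    calc c * d / C * P / Real.log y = c * (d / Real.log y) * (P / C) := by ring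
      _ ≤ c * (s * κ) * X := by gcongr
      _ = s * (c * κ * X) := by ring
      _ ≤ R := hsumL.trans hL
  · have hPX : X ≤ P / c := (le_div_iff₀ hc).2 (by linarith)
    calc R ≤ M + s * (C * κ * X) := hU.trans (by gcongr)
      _ ≤ s * κ * X + s * (C * κ * X) := by gcongr
      _ = (C + 1) * (s * κ) * X := by ring
      _ ≤ (C + 1) * (D / Real.log y) * (P / c) := by gcongr
      _ = _ := by ring
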